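/- If X is a distance convex geodesic metric space, then every local geodesic in X is globally minimizing, i.e. every local geodesic c : I → X is a geodesic. -/

import Mathlib

/-!
Two geodesics that agree on an interval `[x, y]` with `x < y` glue to a geodesic. They have the same
speed `l`. For `s` left of `x`, the function `t ↦ |c(s)c(t)|` is convex on the right-hand piece and has
slope `l` between `x` and `y`, so beyond `y` it stays above the line `l (t - s)`; the triangle
inequality gives the opposite bound. This is `IsGeodesicOn.glue`.

By compactness a local geodesic on `[a, b]` is a geodesic on all pieces of some uniform length, so
gluing finitely many overlapping pieces gives a geodesic on `[a, b]`. The speeds on different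
compact subintervals of `I` are determined by any pair of distinct points common to them, so they
agree.
-/

/-- `c` is a geodesic on `I` (parameterized proportionally to arclength with speed `l ≥ 0`). -/
def IsGeodesicOn {X : Type*} [MetricSpace X] (c : ℝ → X) (I : Set ℝ) : Prop :=
  ∃ l : ℝ, 0 ≤ l ∧ ∀ s ∈ I, ∀ t ∈ I, dist (c s) (c t) = l * |s - t|

/-- A metric space is geodesic if every pair of points is joined by a geodesic. -/
def IsGeodesicSpace (X : Type*) [MetricSpace X] : Prop :=
  ∀ x y : X, ∃ c : ℝ → X, c 0 = x ∧ c 1 = y ∧ IsGeodesicOn c (Set.Icc 0 1)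

/-- A metric space is distance convex if for every point `p` and every geodesic `c : I → X`,
the function `t ↦ |p c(t)|` is convex on `I`. -/
def IsDistanceConvex (X : Type*) [MetricSpace X] : Prop :=
  ∀ (p : X) (c : ℝ → X) (I : Set ℝ), Convex ℝ I → IsGeodesicOn c I →
    ConvexOn ℝ I (fun t => dist p (c t))

theorem IsGeodesicOn.mono {X : Type*} [MetricSpace X] {c : ℝ → X} {I J : Set ℝ}
    (h : IsGeodesicOn c J) (hIJ : I ⊆ J) : IsGeodesicOn c I := by
  obtain ⟨l, hl, h⟩ := h
  exact ⟨l, hl, fun s hs t ht => h s (hIJ hs) t (hIJ ht)⟩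

/-- In a distance convex space, geodesics on two intervals with nondegenerate overlap `[x, y]` glue
to a geodesic on the union. -/
theorem IsGeodesicOn.glue {X : Type*} [MetricSpace X] (hdc : IsDistanceConvex X) {c : ℝ → X}
    {a x y b : ℝ} (hax : a ≤ x) (hxy : x < y) (hyb : y ≤ b)
    (h₁ : IsGeodesicOn c (Set.Icc a y)) (h₂ : IsGeodesicOn c (Set.Icc x b)) :
    IsGeodesicOn c (Set.Icc a b) := by
  have h₂' := h₂
  obtain ⟨l, hl, h₁⟩ := h₁
  obtain ⟨m, -, h₂⟩ := h₂
  have hlm : m = l := by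
    have e₁ := h₁ x ⟨hax, hxy.le⟩ y ⟨hax.trans hxy.le, le_rfl⟩
    have e₂ := h₂ x ⟨le_rfl, hxy.le.trans hyb⟩ y ⟨hxy.le, hyb⟩
    exact mul_right_cancel₀ (abs_ne_zero.2 (sub_ne_zero.2 hxy.ne)) (e₂.symm.trans e₁)
  subst hlm
  have key : ∀ s ∈ Set.Icc a b, ∀ t ∈ Set.Icc a b, s ≤ t →
      dist (c s) (c t) = m * |s - t| := by
    rintro s ⟨has, hsb⟩ t ⟨hat, htb⟩ hst
    by_cases hty : t ≤ y
    · exact h₁ s ⟨has, hst.trans hty⟩ t ⟨hat, hty⟩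
    by_cases hxs : x ≤ s
    · exact h₂ s ⟨hxs, hsb⟩ t ⟨hxs.trans hst, htb⟩
    push Not at hty hxs
    have esx := h₁ s ⟨has, by linarith⟩ x ⟨hax, hxy.le⟩
    have esy := h₁ s ⟨has, by linarith⟩ y ⟨by linarith, le_rfl⟩
    have ext := h₂ x ⟨le_rfl, by linarith⟩ t ⟨by linarith, htb⟩
    have hslope := (hdc (c s) c _ (convex_Icc x b) h₂').slope_mono_adjacent
      (x := x) (y := y) (z := t) ⟨le_rfl, by linarith⟩ ⟨by linarith, htb⟩ hxy hty
    have tri := dist_triangle (c s) (c x) (c t)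
    rw [abs_of_neg (by linarith)] at esx esy ext ⊢
    simp only [esx, esy] at hslope
    have hm : (m * -(s - y) - m * -(s - x)) / (y - x) = m := by
      rw [div_eq_iff (by linarith)]
      ring
    rw [hm, le_div_iff₀ (by linarith)] at hslope
    apply le_antisymm <;> linarith
  refine ⟨m, hl, fun s hs t ht => ?_⟩
  rcases le_total s t with hst | hst
  · exact key s hs t ht hst
  · rw [dist_comm, abs_sub_comm]
    exact key t ht s hs hst

/-- Local geodesics on compact intervals are geodesics. -/
theorem isGeodesicOn_Icc_of_local {X : Type*} [MetricSpace X] (hdc : IsDistanceConvex X)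
    {c : ℝ → X} {a b : ℝ} (hab : a ≤ b)
    (hloc : ∀ t ∈ Set.Icc a b, ∃ ε > 0,
      IsGeodesicOn c (Set.Icc a b ∩ Set.Ioo (t - ε) (t + ε))) :
    IsGeodesicOn c (Set.Icc a b) := by
  choose! ε hε hgeo using hloc
  -- A Lebesgue number for the cover provides pieces of uniform size.
  obtain ⟨δ, hδ, hL⟩ := lebesgue_number_lemma_of_metric (isCompact_Icc (a := a) (b := b))
    (c := fun t : Set.Icc a b => Set.Ioo (t.1 - ε t.1) (t.1 + ε t.1)) (fun _ => isOpen_Ioo)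
    (fun t ht => Set.mem_iUnion.2 ⟨⟨t, ht⟩, by
      have := hε t ht
      exact ⟨by linarith, by linarith⟩⟩)
  have hpiece : ∀ t ∈ Set.Icc a b,
      IsGeodesicOn c (Set.Icc a b ∩ Set.Icc (t - δ / 2) (t + δ / 2)) := by
    intro t ht
    obtain ⟨i, hi⟩ := hL t ht
    refine (hgeo i i.2).mono fun u hu => ⟨hu.1, hi ?_⟩
    rw [Real.ball_eq_Ioo]
    exact ⟨by linarith [hu.2.1], by linarith [hu.2.2]⟩
  have hstep : ∀ n : ℕ, IsGeodesicOn c (Set.Icc a (min b (a + (n + 1) * (δ / 2)))) := by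
    intro n
    induction n with
    | zero =>
      refine (hpiece a ⟨le_rfl, hab⟩).mono fun u hu => ?_
      have h := le_min_iff.1 hu.2
      norm_num at h
      exact ⟨⟨hu.1, h.1⟩, by linarith [hu.1], h.2⟩
    | succ n ih =>
      push_cast
      have hn : (0 : ℝ) ≤ n * (δ / 2) := by positivity
      rcases le_total b (a + (n + 1) * (δ / 2)) with h | h
      · rw [min_eq_left h] at ih
        exact ih.mono (Set.Icc_subset_Icc_right (min_le_left _ _))
      · rw [min_eq_right h] at ih
        refine ih.glue hdc (x := a + (n + 1) * (δ / 2) - δ / 2) (by linarith) (by linarith)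
          (le_min h (by linarith)) ?_
        refine (hpiece _ ⟨by linarith, h⟩).mono fun u hu => ?_
        have hu₂ := le_min_iff.1 hu.2
        exact ⟨⟨by linarith [hu.1], hu₂.1⟩, hu.1, by linarith [hu₂.2]⟩
  obtain ⟨n, hn⟩ := exists_nat_gt ((b - a) / (δ / 2))
  rw [div_lt_iff₀ (by linarith)] at hn
  have h := hstep n
  rwa [min_eq_left (by linarith)] at h

/-- **Lemma 2.2.** In a distance convex geodesic metric space every local geodesic is
globally minimizing, i.e. every local geodesic `c : I → X` is a geodesic. -/
theorem local_geodesics_are_geodesics_of_distance_convex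
    {X : Type*} [MetricSpace X]
    (hgeo : IsGeodesicSpace X) (hdc : IsDistanceConvex X)
    (c : ℝ → X) (I : Set ℝ) (hI : Convex ℝ I)
    (hloc : ∀ t ∈ I, ∃ ε > 0, IsGeodesicOn c (I ∩ Set.Ioo (t - ε) (t + ε))) :
    IsGeodesicOn c I := by
  have hIcc : ∀ a ∈ I, ∀ b ∈ I, a ≤ b → IsGeodesicOn c (Set.Icc a b) := by
    intro a ha b hb hab
    have hsub : Set.Icc a b ⊆ I := hI.ordConnected.out ha hb
    refine isGeodesicOn_Icc_of_local hdc hab fun t ht => ?_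
    obtain ⟨ε, hε, h⟩ := hloc t (hsub ht)
    exact ⟨ε, hε, h.mono (Set.inter_subset_inter_left _ hsub)⟩
  rcases I.subsingleton_or_nontrivial with hs | hn
  · exact ⟨0, le_rfl, fun s hs' t ht => by simp [hs hs' ht]⟩
  obtain ⟨a, ha, b, hb, hab⟩ := hn.exists_lt
  -- The common speed is read off from the reference points `a < b`.
  obtain ⟨l, hl, h⟩ := hIcc a ha b hb hab.le
  refine ⟨l, hl, fun s hs t ht => ?_⟩
  have hmin : min a (min s t) ∈ I := by
    rcases min_choice a (min s t) with h | h <;> rw [h]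
    · exact ha
    · rcases min_choice s t with h | h <;> rw [h] <;> assumption
  have hmax : max b (max s t) ∈ I := by
    rcases max_choice b (max s t) with h | h <;> rw [h]
    · exact hb
    · rcases max_choice s t with h | h <;> rw [h] <;> assumption
  have h₁ : min a (min s t) ≤ a := min_le_left _ _
  have h₂ : b ≤ max b (max s t) := le_max_left _ _
  obtain ⟨m, -, hm⟩ := hIcc _ hmin _ hmax (by linarith)
  have e := hm a ⟨h₁, by linarith⟩ b ⟨by linarith, h₂⟩
  rw [h a ⟨le_rfl, hab.le⟩ b ⟨hab.le, le_rfl⟩] at e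
  rw [mul_right_cancel₀ (abs_ne_zero.2 (sub_ne_zero.2 hab.ne)) e]
  exact hm s ⟨by simp, by simp⟩ t ⟨by simp, by simp⟩
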